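/- Let μ be a permuton. Suppose that for (μ⊗μ)-almost every pair of points ((x_1,y_1),(x_2,y_2)) ∈ ([0,1]²)² with x_1 < x_2 and y_1 < y_2, the quantities a_{ij} = μ([x_{i−1},x_i]×[y_{j−1},y_j]) for i,j ∈ {1,2,3} (where x_0 = y_0 = 0 and x_3 = y_3 = 1) satisfy a_{22}a_{33} − a_{23}a_{32} + a_{22}a_{11} − a_{12}a_{21} + a_{22}a_{31} − a_{21}a_{32} + a_{22}a_{13} − a_{12}a_{23} = 0. Then μ([x_1,x_2]×[y_1,y_2]) = (x_2−x_1)(y_2−y_1) for all points (x_1,y_1),(x_2,y_2) ∈ supp μ with x_1 ≤ x_2 and y_1 ≤ y_2. -/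

import Mathlib

open MeasureTheory Filter

noncomputable section

/-- A permuton: a Borel probability measure on `ℝ × ℝ` (supported on `[0,1]²`)
with uniform marginals. -/
def IsPermuton (μ : Measure (ℝ × ℝ)) : Prop :=
  IsProbabilityMeasure μ ∧
    (∀ x x' : ℝ, 0 ≤ x → x ≤ x' → x' ≤ 1 →
      μ (Set.Icc x x' ×ˢ Set.Icc (0 : ℝ) 1) = ENNReal.ofReal (x' - x)) ∧
    (∀ y y' : ℝ, 0 ≤ y → y ≤ y' → y' ≤ 1 →
      μ (Set.Icc (0 : ℝ) 1 ×ˢ Set.Icc y y') = ENNReal.ofReal (y' - y))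

/-- The uniform permuton: two-dimensional Lebesgue measure on `[0,1]²`. -/
def uniformPermuton : Measure (ℝ × ℝ) :=
  volume.restrict (Set.Icc (0 : ℝ) 1 ×ˢ Set.Icc (0 : ℝ) 1)

/-- The support of a Borel measure: all points each of whose open neighbourhoods has
positive measure. -/
def measSupport (μ : Measure (ℝ × ℝ)) : Set (ℝ × ℝ) :=
  {p | ∀ U : Set (ℝ × ℝ), IsOpen U → p ∈ U → 0 < μ U}

/-- The pattern density of a `k`-permutation `π` in a measure `μ` on `ℝ × ℝ`:
the `μ^{⊗ k}`-probability that `k` sampled points, relabelled so that their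
`x`-coordinates increase, have `y`-coordinates ordered according to `π`. -/
def PermutonDensity {k : ℕ} (π : Equiv.Perm (Fin k)) (μ : Measure (ℝ × ℝ)) : ℝ :=
  ((Measure.pi fun _ : Fin k => μ)
    {p : Fin k → ℝ × ℝ | ∃ σ : Equiv.Perm (Fin k),
      StrictMono (fun i => (p (σ i)).1) ∧
        ∀ i j : Fin k, (p (σ i)).2 < (p (σ j)).2 ↔ π i < π j}).toReal

open scoped Classical in
/-- The pattern density of a `k`-permutation `π` in an `n`-permutation `Π`:
the proportion of `k`-element subsets of `Fin n` on which `Π` induces the pattern `π`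
(zero when `n < k`). -/
def PatternDensity {k n : ℕ} (π : Equiv.Perm (Fin k)) (Perm : Equiv.Perm (Fin n)) : ℝ :=
  ((Finset.univ.filter fun A : Finset (Fin n) =>
      ∃ h : A.card = k, ∀ i j : Fin k,
        Perm ↑(A.orderIsoOfFin h i) < Perm ↑(A.orderIsoOfFin h j) ↔ π i < π j).card : ℝ) /
    (n.choose k)

/-- A sequence of permutations (of varying orders) is quasirandom if the density of every
pattern `π` converges to `1/|π|!`. -/
def Quasirandom (P : ℕ → (n : ℕ) × Equiv.Perm (Fin n)) : Prop :=
  ∀ (k : ℕ) (π : Equiv.Perm (Fin k)),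
    Tendsto (fun i => PatternDensity π (P i).2) atTop (nhds (1 / (Nat.factorial k : ℝ)))

/-- A set `S` of `k`-permutations is `Σ`-forcing if a sequence of permutations is quasirandom
exactly when the sum of the densities of the patterns from `S` converges to `|S|/k!`. -/
def SigmaForcing {k : ℕ} (S : Finset (Equiv.Perm (Fin k))) : Prop :=
  ∀ P : ℕ → (n : ℕ) × Equiv.Perm (Fin n),
    Quasirandom P ↔
      Tendsto (fun i => ∑ π ∈ S, PatternDensity π (P i).2) atTop
        (nhds ((S.card : ℝ) / (Nat.factorial k : ℝ)))

/-- The `4`-permutation written in one-line notation as `(a+1)(b+1)(c+1)(d+1)`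
(inputs are 0-indexed). -/
def mk4 (a b c d : Fin 4) (h : Function.Bijective ![a, b, c, d] := by decide) :
    Equiv.Perm (Fin 4) :=
  Equiv.ofBijective _ h

/-- A doubly stochastic matrix: non-negative entries, all row and column sums equal to one. -/
def IsDoublyStochastic {n : ℕ} (A : Matrix (Fin n) (Fin n) ℝ) : Prop :=
  (∀ i j, 0 ≤ A i j) ∧ (∀ i, ∑ j, A i j = 1) ∧ (∀ j, ∑ i, A i j = 1)

/-- The step permuton `μ[A]` associated with an `n × n` doubly stochastic matrix `A`. -/
def stepPermuton {n : ℕ} (A : Matrix (Fin n) (Fin n) ℝ) : Measure (ℝ × ℝ) :=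
  ∑ i : Fin n, ∑ j : Fin n,
    ENNReal.ofReal (A i j * n) •
      volume.restrict
        (Set.Ico ((i : ℝ) / n) (((i : ℝ) + 1) / n) ×ˢ
          Set.Ico ((j : ℝ) / n) (((j : ℝ) + 1) / n))

/-- The matrix `B^{ij}` (0-indexed: `p, q ∈ [n-1]`): `+1` at positions `(p,q)` and
`(p+1,q+1)`, `-1` at positions `(p,q+1)` and `(p+1,q)`, `0` elsewhere. -/
def Bmat (n : ℕ) (p q : Fin (n - 1)) : Matrix (Fin n) (Fin n) ℝ := fun a b =>
  (if (a : ℕ) = (p : ℕ) ∧ (b : ℕ) = (q : ℕ) then 1 else 0) +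
    (if (a : ℕ) = (p : ℕ) + 1 ∧ (b : ℕ) = (q : ℕ) + 1 then 1 else 0) -
    (if (a : ℕ) = (p : ℕ) ∧ (b : ℕ) = (q : ℕ) + 1 then 1 else 0) -
    (if (a : ℕ) = (p : ℕ) + 1 ∧ (b : ℕ) = (q : ℕ) then 1 else 0)

/-- The matrix `A + ∑_{i,j} x_{ij} B^{ij}` where `A` is the `n × n` matrix with all
entries `1/n`. -/
def pertMatrix (n : ℕ) (x : Fin (n - 1) × Fin (n - 1) → ℝ) : Matrix (Fin n) (Fin n) ℝ :=
  fun a b => 1 / n + ∑ p : Fin (n - 1) × Fin (n - 1), x p * Bmat n p.1 p.2 a b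

/-- The function `h_{S,n}`: the sum over `π ∈ S` of the pattern density of `π` in the
step permuton of the perturbed matrix. -/
def hSN (n : ℕ) (S : Finset (Equiv.Perm (Fin 4))) (x : Fin (n - 1) × Fin (n - 1) → ℝ) : ℝ :=
  ∑ π ∈ S, PermutonDensity π (stepPermuton (pertMatrix n x))

open scoped Classical in
/-- The cover matrix of a set `S` of `4`-permutations: `C i j` is the number of `π ∈ S`
with `π j = i`. -/
def coverMatrix (S : Finset (Equiv.Perm (Fin 4))) : Fin 4 → Fin 4 → ℕ := fun i j =>
  (S.filter fun π => π j = i).card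

/-- The eight symmetry operations on `4`-permutations. -/
def symOps : List (Equiv.Perm (Fin 4) → Equiv.Perm (Fin 4)) :=
  [fun σ => σ,
   fun σ => σ * Fin.revPerm,
   fun σ => Fin.revPerm * σ,
   fun σ => Fin.revPerm * σ * Fin.revPerm,
   fun σ => σ⁻¹,
   fun σ => σ⁻¹ * Fin.revPerm,
   fun σ => Fin.revPerm * σ⁻¹,
   fun σ => Fin.revPerm * σ⁻¹ * Fin.revPerm]

open scoped Classical in
/-- `T` is symmetric to `S` if one of the eight symmetry operations maps `S` onto `T`. -/
def SymmetricSets (S T : Finset (Equiv.Perm (Fin 4))) : Prop :=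
  ∃ op ∈ symOps, T = S.image op

end

/-!
For an array `A` and a cell `(i, j)`, summing the `2 × 2` minors through `A i j` gives
`∑ k, ∑ l, (A i j * A k l - A i l * A k j) = A i j * (∑ k, ∑ l, A k l) - (∑ l, A i l) * ∑ k, A k j`.
For a `3 × 3` array and the central cell the left-hand side is the polynomial of the hypothesis,
while for the masses of the cells of a grid the total is `1`, and the row and column sums are the
side lengths of the cell. So the hypothesis says that almost every rectangle spanned by an
increasing pair of points has mass equal to its area. Since the marginals have no atoms, the mass
of a rectangle is a continuous function of its corners, so the equality extends from almost every
pair to all increasing pairs in the support of `μ ⊗ μ`.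
-/

open Set Topology

section Order

variable {α : Type*} [LinearOrder α] [TopologicalSpace α] [OrderClosedTopology α]

theorem eventually_le_iff_le_of_ne {a c : α} (h : a ≠ c) : ∀ᶠ x in 𝓝 a, (x ≤ c ↔ a ≤ c) := by
  rcases h.lt_or_gt with h | h
  · filter_upwards [eventually_lt_nhds h] with x hx
    exact iff_of_true hx.le h.le
  · filter_upwards [eventually_gt_nhds h] with x hx
    exact iff_of_false hx.not_ge h.not_ge

theorem eventually_ge_iff_ge_of_ne {a c : α} (h : a ≠ c) : ∀ᶠ x in 𝓝 a, (c ≤ x ↔ c ≤ a) :=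
  eventually_le_iff_le_of_ne (α := αᵒᵈ) h

theorem eventually_mem_Icc_iff_of_ne {a b c : α} (ha : c ≠ a) (hb : c ≠ b) :
    ∀ᶠ p : α × α in 𝓝 (a, b), (c ∈ Icc p.1 p.2 ↔ c ∈ Icc a b) := by
  filter_upwards [(continuous_fst.tendsto (a, b)).eventually (eventually_le_iff_le_of_ne ha.symm),
    (continuous_snd.tendsto (a, b)).eventually (eventually_ge_iff_ge_of_ne hb.symm)] with p h₁ h₂
  exact and_congr h₁ h₂

end Order

section Rectangles

variable {α β : Type*} [MeasurableSpace α] [MeasurableSpace β] {μ : Measure (α × β)}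

theorem measure_singleton_prod [MeasurableSingletonClass α] [NullSingletonClass μ.fst]
    (a : α) (t : Set β) : μ ({a} ×ˢ t) = 0 := by
  refine measure_mono_null (fun z hz => hz.1) (?_ : μ (Prod.fst ⁻¹' {a}) = 0)
  rw [← Measure.fst_apply (measurableSet_singleton a), measure_singleton]

theorem measure_prod_singleton [MeasurableSingletonClass β] [NullSingletonClass μ.snd]
    (s : Set α) (b : β) : μ (s ×ˢ {b}) = 0 := by
  refine measure_mono_null (fun z hz => hz.2) (?_ : μ (Prod.snd ⁻¹' {b}) = 0)
  rw [← Measure.snd_apply (measurableSet_singleton b), measure_singleton]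

variable [LinearOrder α] [TopologicalSpace α] [OrderClosedTopology α] [OpensMeasurableSpace α]

theorem continuous_measure_Icc_prod_Icc [FirstCountableTopology α] [LinearOrder β]
    [TopologicalSpace β] [OrderClosedTopology β] [OpensMeasurableSpace β]
    [FirstCountableTopology β] [IsFiniteMeasure μ] [NullSingletonClass μ.fst]
    [NullSingletonClass μ.snd] :
    Continuous fun pq : (α × β) × (α × β) => μ (Icc pq.1.1 pq.2.1 ×ˢ Icc pq.1.2 pq.2.2) := by
  have fst_ne (a : α) : ∀ᵐ z ∂μ, z.1 ≠ a :=
    ae_of_ae_map measurable_fst.aemeasurable (μ.fst.ae_ne a)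
  have snd_ne (b : β) : ∀ᵐ z ∂μ, z.2 ≠ b :=
    ae_of_ae_map measurable_snd.aemeasurable (μ.snd.ae_ne b)
  refine continuous_iff_continuousAt.2 fun ⟨⟨a, b⟩, ⟨c, d⟩⟩ =>
    tendsto_measure_of_ae_tendsto_indicator_of_isFiniteMeasure _
      (measurableSet_Icc.prod measurableSet_Icc)
      (fun _ => measurableSet_Icc.prod measurableSet_Icc) ?_
  filter_upwards [fst_ne a, fst_ne c, snd_ne b, snd_ne d] with z ha hc hb hd
  have h₁ : Tendsto (fun pq : (α × β) × (α × β) => (pq.1.1, pq.2.1)) (𝓝 ((a, b), (c, d)))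
      (𝓝 (a, c)) := Continuous.tendsto (by fun_prop) _
  have h₂ : Tendsto (fun pq : (α × β) × (α × β) => (pq.1.2, pq.2.2)) (𝓝 ((a, b), (c, d)))
      (𝓝 (b, d)) := Continuous.tendsto (by fun_prop) _
  filter_upwards [h₁.eventually (eventually_mem_Icc_iff_of_ne ha hc),
    h₂.eventually (eventually_mem_Icc_iff_of_ne hb hd)] with pq hpq₁ hpq₂
  exact and_congr hpq₁ hpq₂

theorem sum_measureReal_Icc {ν : Measure α} [IsFiniteMeasure ν] [NullSingletonClass ν] :
    ∀ {n : ℕ} {t : Fin (n + 1) → α}, Monotone t →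
      ∑ j : Fin n, ν.real (Icc (t j.castSucc) (t j.succ)) = ν.real (Icc (t 0) (t (Fin.last n)))
  | 0, t, _ => by simp [Measure.real]
  | n + 1, t, ht => by
    have hdisj : AEDisjoint ν (Icc (t 0) (t (Fin.last n).castSucc))
        (Icc (t (Fin.last n).castSucc) (t (Fin.last (n + 1)))) :=
      measure_mono_null (fun x hx => le_antisymm hx.1.2 hx.2.1) (measure_singleton _)
    calc ∑ j : Fin (n + 1), ν.real (Icc (t j.castSucc) (t j.succ))
        = ν.real (Icc (t 0) (t (Fin.last n).castSucc)) +
            ν.real (Icc (t (Fin.last n).castSucc) (t (Fin.last (n + 1)))) := by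
          rw [Fin.sum_univ_castSucc, Fin.succ_last]
          congr 1
          exact sum_measureReal_Icc (t := t ∘ Fin.castSucc)
            (ht.comp Fin.strictMono_castSucc.monotone)
      _ = ν.real (Icc (t 0) (t (Fin.last (n + 1)))) := by
          rw [← measureReal_union₀ measurableSet_Icc.nullMeasurableSet hdisj,
            Icc_union_Icc_eq_Icc (ht (Fin.zero_le _)) (ht (Fin.le_last _))]

theorem sum_measureReal_prod_Icc {μ : Measure (β × α)} [IsFiniteMeasure μ]
    [NullSingletonClass μ.snd] (s : Set β) {n : ℕ} {t : Fin (n + 1) → α} (ht : Monotone t) :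
    ∑ j : Fin n, μ.real (s ×ˢ Icc (t j.castSucc) (t j.succ)) =
      μ.real (s ×ˢ Icc (t 0) (t (Fin.last n))) := by
  let ν : Measure α := (μ.restrict (s ×ˢ univ)).snd
  have hν : NullSingletonClass ν := ⟨fun a => nonpos_iff_eq_zero.1 <|
    (Measure.snd_mono Measure.restrict_le_self {a}).trans (measure_singleton a).le⟩
  have hν_Icc (a b : α) : ν.real (Icc a b) = μ.real (s ×ˢ Icc a b) := by
    rw [Measure.real, Measure.snd_apply measurableSet_Icc,
      Measure.restrict_apply (measurable_snd measurableSet_Icc), ← univ_prod, prod_inter_prod,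
      univ_inter, inter_univ, Measure.real]
  simp only [← hν_Icc, sum_measureReal_Icc ht]

end Rectangles

section Support

variable {X Y : Type*} [TopologicalSpace X] [MeasurableSpace X] [TopologicalSpace Y]
  [MeasurableSpace Y]

theorem mk_mem_support_prod {μ : Measure X} {ν : Measure Y} [SFinite ν] {x : X} {y : Y}
    (hx : x ∈ μ.support) (hy : y ∈ ν.support) : (x, y) ∈ (μ.prod ν).support := by
  refine ((𝓝 x).basis_sets.prod_nhds (𝓝 y).basis_sets).mem_measureSupport.2 fun U hU => ?_
  rw [id, id, Measure.prod_prod]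
  exact ENNReal.mul_pos ((Measure.mem_support_iff_forall x).1 hx _ hU.1).ne'
    ((Measure.mem_support_iff_forall y).1 hy _ hU.2).ne'

theorem mem_of_mem_support_of_ae_imp_mem {μ : Measure X} {U C : Set X} (hU : IsOpen U)
    (hC : IsClosed C) (h : ∀ᵐ x ∂μ, x ∈ U → x ∈ C) {x : X} (hx : x ∈ μ.support) (hxU : x ∈ U) :
    x ∈ C :=
  have hsub : μ.support ⊆ Uᶜ ∪ C := Measure.support_subset_of_isClosed
    (hU.isClosed_compl.union hC) (h.mono fun _ => imp_iff_not_or.1)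
  (hsub hx).resolve_left (not_not.2 hxU)

theorem measSupport_eq_support (μ : Measure (ℝ × ℝ)) : measSupport μ = μ.support := by
  rw [Measure.support_eq_forall_isOpen]
  exact Set.ext fun p => forall_congr' fun U => forall_comm

theorem measure_Icc_prod_Icc_eq_ofReal_of_mem_support {μ : Measure (ℝ × ℝ)} [IsFiniteMeasure μ]
    [NullSingletonClass μ.fst] [NullSingletonClass μ.snd]
    (h : ∀ᵐ pq ∂μ.prod μ, pq.1.1 < pq.2.1 → pq.1.2 < pq.2.2 →
      μ (Icc pq.1.1 pq.2.1 ×ˢ Icc pq.1.2 pq.2.2) =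
        ENNReal.ofReal ((pq.2.1 - pq.1.1) * (pq.2.2 - pq.1.2)))
    {p q : ℝ × ℝ} (hp : p ∈ μ.support) (hq : q ∈ μ.support) (hx : p.1 ≤ q.1) (hy : p.2 ≤ q.2) :
    μ (Icc p.1 q.1 ×ˢ Icc p.2 q.2) = ENNReal.ofReal ((q.1 - p.1) * (q.2 - p.2)) := by
  rcases hx.eq_or_lt with hx | hx
  · simp [hx, measure_singleton_prod]
  rcases hy.eq_or_lt with hy | hy
  · simp [hy, measure_prod_singleton]
  have hU : IsOpen {pq : (ℝ × ℝ) × (ℝ × ℝ) | pq.1.1 < pq.2.1 ∧ pq.1.2 < pq.2.2} :=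
    (isOpen_lt (by fun_prop) (by fun_prop)).and (isOpen_lt (by fun_prop) (by fun_prop))
  have hC : IsClosed {pq : (ℝ × ℝ) × (ℝ × ℝ) | μ (Icc pq.1.1 pq.2.1 ×ˢ Icc pq.1.2 pq.2.2) =
      ENNReal.ofReal ((pq.2.1 - pq.1.1) * (pq.2.2 - pq.1.2))} :=
    isClosed_eq continuous_measure_Icc_prod_Icc (ENNReal.continuous_ofReal.comp (by fun_prop))
  exact mem_of_mem_support_of_ae_imp_mem hU hC (h.mono fun pq hpq hlt => hpq hlt.1 hlt.2)
    (mk_mem_support_prod hp hq) ⟨hx, hy⟩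

end Support

section Minors

variable {R : Type*} [CommRing R]

theorem sum_sum_minors {m n : Type*} [Fintype m] [Fintype n] (A : m → n → R) (i : m) (j : n) :
    ∑ k, ∑ l, (A i j * A k l - A i l * A k j) =
      A i j * ∑ k, ∑ l, A k l - (∑ l, A i l) * ∑ k, A k j := by
  simp only [Finset.sum_sub_distrib, Finset.mul_sum, Finset.sum_mul]

theorem sum_sum_minors_fin_three (A : Fin 3 → Fin 3 → R) :
    ∑ k, ∑ l, (A 1 1 * A k l - A 1 l * A k 1) =
      A 1 1 * A 2 2 - A 1 2 * A 2 1 + A 1 1 * A 0 0 - A 0 1 * A 1 0 +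
        A 1 1 * A 2 0 - A 1 0 * A 2 1 + A 1 1 * A 0 2 - A 0 1 * A 1 2 := by
  simp only [Fin.sum_univ_three]
  ring

end Minors

/-- `IsUnitPartition t` says that the points `t 0 ≤ t 1 ≤ ⋯ ≤ t n` subdivide `[0, 1]` into `n`
intervals. Consecutive points may coincide. -/
structure IsUnitPartition {n : ℕ} (t : Fin (n + 1) → ℝ) : Prop where
  monotone : Monotone t
  zero : t 0 = 0
  last : t (Fin.last n) = 1

/-- The array of masses `a_{ij}` that `μ` gives to the closed cells of the grid with vertical lines
at the points `s` and horizontal lines at the points `t`. The first index numbers the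
intervals on the `x`-axis, as in `a_{ij}`, but indices start at `0`. -/
noncomputable def gridMass (μ : Measure (ℝ × ℝ)) {m n : ℕ} (s : Fin (m + 1) → ℝ)
    (t : Fin (n + 1) → ℝ) (i : Fin m) (j : Fin n) : ℝ :=
  μ.real (Icc (s i.castSucc) (s i.succ) ×ˢ Icc (t j.castSucc) (t j.succ))

namespace IsUnitPartition

theorem nonneg {n : ℕ} {t : Fin (n + 1) → ℝ} (ht : IsUnitPartition t) (i : Fin (n + 1)) :
    0 ≤ t i :=
  ht.zero ▸ ht.monotone (Fin.zero_le i)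

theorem le_one {n : ℕ} {t : Fin (n + 1) → ℝ} (ht : IsUnitPartition t) (i : Fin (n + 1)) :
    t i ≤ 1 :=
  ht.last ▸ ht.monotone (Fin.le_last i)

theorem sum_sub_eq_one {n : ℕ} {t : Fin (n + 1) → ℝ} (ht : IsUnitPartition t) :
    ∑ i : Fin n, (t i.succ - t i.castSucc) = 1 := by
  rw [Finset.sum_sub_distrib]
  linarith [Fin.sum_univ_succ t, Fin.sum_univ_castSucc t, ht.zero, ht.last]

theorem vec_four {a b : ℝ} (ha : 0 ≤ a) (hab : a ≤ b) (hb : b ≤ 1) :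
    IsUnitPartition ![0, a, b, 1] where
  monotone := by simp [monotone_vecCons, ha, hab, hb]
  zero := rfl
  last := rfl

end IsUnitPartition

theorem gridMass_map_swap (μ : Measure (ℝ × ℝ)) {m n : ℕ} (s : Fin (m + 1) → ℝ)
    (t : Fin (n + 1) → ℝ) (i : Fin m) (j : Fin n) :
    gridMass (μ.map Prod.swap) t s j i = gridMass μ s t i j := by
  rw [gridMass, map_measureReal_apply measurable_swap (measurableSet_Icc.prod measurableSet_Icc),
    preimage_swap_prod, gridMass]

namespace IsPermuton

variable {μ : Measure (ℝ × ℝ)}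

theorem map_swap (hμ : IsPermuton μ) : IsPermuton (μ.map Prod.swap) := by
  have := hμ.1
  have hswap (a b c d : ℝ) :
      μ.map Prod.swap (Icc a b ×ˢ Icc c d) = μ (Icc c d ×ˢ Icc a b) := by
    rw [Measure.map_apply measurable_swap (measurableSet_Icc.prod measurableSet_Icc),
      preimage_swap_prod]
  simp only [IsPermuton, hswap]
  exact ⟨Measure.isProbabilityMeasure_map measurable_swap.aemeasurable, hμ.2.2, hμ.2.1⟩

theorem ae_mem_unitSquare (hμ : IsPermuton μ) :
    ∀ᵐ z ∂μ, z ∈ Icc (0 : ℝ) 1 ×ˢ Icc (0 : ℝ) 1 := by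
  have := hμ.1
  have hfull : μ (Icc (0 : ℝ) 1 ×ˢ Icc (0 : ℝ) 1) = 1 := by
    simpa using hμ.2.1 0 1 le_rfl zero_le_one le_rfl
  exact (mem_ae_iff_prob_eq_one (measurableSet_Icc.prod measurableSet_Icc)).2 hfull

theorem nullSingletonClass_fst (hμ : IsPermuton μ) : NullSingletonClass μ.fst where
  measure_singleton x := by
    have hsegment : μ (({x} ∩ Icc 0 1) ×ˢ Icc 0 1) = 0 := by
      by_cases hx : x ∈ Icc (0 : ℝ) 1
      · simpa [inter_eq_left.2 (singleton_subset_iff.2 hx)] using hμ.2.1 x x hx.1 le_rfl hx.2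
      · rw [singleton_inter_eq_empty.2 hx, empty_prod, measure_empty]
    rw [Measure.fst_apply (measurableSet_singleton x), measure_eq_zero_iff_ae_notMem]
    filter_upwards [hμ.ae_mem_unitSquare, measure_eq_zero_iff_ae_notMem.1 hsegment]
      with z hz hz_segment hzx
    exact hz_segment ⟨⟨hzx, hz.1⟩, hz.2⟩

theorem nullSingletonClass_snd (hμ : IsPermuton μ) : NullSingletonClass μ.snd :=
  Measure.fst_map_swap (ρ := μ) ▸ hμ.map_swap.nullSingletonClass_fst

theorem sum_gridMass_right (hμ : IsPermuton μ) {m n : ℕ} {s : Fin (m + 1) → ℝ}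
    {t : Fin (n + 1) → ℝ} (hs : IsUnitPartition s) (ht : IsUnitPartition t) (i : Fin m) :
    ∑ j, gridMass μ s t i j = s i.succ - s i.castSucc := by
  have := hμ.1
  have := hμ.nullSingletonClass_snd
  have hle : s i.castSucc ≤ s i.succ := hs.monotone i.castSucc_le_succ
  simp only [gridMass]
  rw [sum_measureReal_prod_Icc _ ht.monotone, ht.zero, ht.last, Measure.real,
    hμ.2.1 _ _ (hs.nonneg _) hle (hs.le_one _), ENNReal.toReal_ofReal (sub_nonneg.2 hle)]

theorem sum_gridMass_left (hμ : IsPermuton μ) {m n : ℕ} {s : Fin (m + 1) → ℝ}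
    {t : Fin (n + 1) → ℝ} (hs : IsUnitPartition s) (ht : IsUnitPartition t) (j : Fin n) :
    ∑ i, gridMass μ s t i j = t j.succ - t j.castSucc := by
  simpa only [gridMass_map_swap] using hμ.map_swap.sum_gridMass_right ht hs j

theorem sum_sum_gridMass (hμ : IsPermuton μ) {m n : ℕ} {s : Fin (m + 1) → ℝ}
    {t : Fin (n + 1) → ℝ} (hs : IsUnitPartition s) (ht : IsUnitPartition t) :
    ∑ i, ∑ j, gridMass μ s t i j = 1 := by
  simp only [hμ.sum_gridMass_right hs ht, hs.sum_sub_eq_one]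

theorem gridMass_eq_mul_of_sum_minors_eq_zero (hμ : IsPermuton μ) {m n : ℕ}
    {s : Fin (m + 1) → ℝ} {t : Fin (n + 1) → ℝ} (hs : IsUnitPartition s)
    (ht : IsUnitPartition t) {i : Fin m} {j : Fin n}
    (h : ∑ k, ∑ l, (gridMass μ s t i j * gridMass μ s t k l -
      gridMass μ s t i l * gridMass μ s t k j) = 0) :
    gridMass μ s t i j = (s i.succ - s i.castSucc) * (t j.succ - t j.castSucc) := by
  rwa [sum_sum_minors, hμ.sum_sum_gridMass hs ht, hμ.sum_gridMass_right hs ht,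
    hμ.sum_gridMass_left hs ht, mul_one, sub_eq_zero] at h

theorem measure_Icc_prod_Icc_of_sum_minors_eq_zero (hμ : IsPermuton μ) {p q : ℝ × ℝ}
    (hp : p ∈ Icc (0 : ℝ) 1 ×ˢ Icc (0 : ℝ) 1) (hq : q ∈ Icc (0 : ℝ) 1 ×ˢ Icc (0 : ℝ) 1)
    (hx : p.1 ≤ q.1) (hy : p.2 ≤ q.2) {A : Fin 3 → Fin 3 → ℝ}
    (hA : A = gridMass μ ![0, p.1, q.1, 1] ![0, p.2, q.2, 1])
    (h : ∑ k, ∑ l, (A 1 1 * A k l - A 1 l * A k 1) = 0) :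
    μ (Icc p.1 q.1 ×ˢ Icc p.2 q.2) = ENNReal.ofReal ((q.1 - p.1) * (q.2 - p.2)) := by
  have := hμ.1
  subst hA
  have hmass : μ.real (Icc p.1 q.1 ×ˢ Icc p.2 q.2) = (q.1 - p.1) * (q.2 - p.2) :=
    hμ.gridMass_eq_mul_of_sum_minors_eq_zero (.vec_four hp.1.1 hx hq.1.2)
      (.vec_four hp.2.1 hy hq.2.2) h
  rw [← hmass, ofReal_measureReal]

end IsPermuton

theorem statement_5 (μ : Measure (ℝ × ℝ)) (hμ : IsPermuton μ)
    (h : ∀ᵐ pq ∂(μ.prod μ), pq.1.1 < pq.2.1 → pq.1.2 < pq.2.2 →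
      ∀ a : Fin 3 → Fin 3 → ℝ,
        (∀ i j : Fin 3, a i j =
          (μ (Set.Icc (![0, pq.1.1, pq.2.1, 1] i.castSucc) (![0, pq.1.1, pq.2.1, 1] i.succ) ×ˢ
              Set.Icc (![0, pq.1.2, pq.2.2, 1] j.castSucc)
                (![0, pq.1.2, pq.2.2, 1] j.succ))).toReal) →
        a 1 1 * a 2 2 - a 1 2 * a 2 1 + a 1 1 * a 0 0 - a 0 1 * a 1 0 +
          a 1 1 * a 2 0 - a 1 0 * a 2 1 + a 1 1 * a 0 2 - a 0 1 * a 1 2 = 0) :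
    ∀ p ∈ measSupport μ, ∀ q ∈ measSupport μ, p.1 ≤ q.1 → p.2 ≤ q.2 →
      μ (Set.Icc p.1 q.1 ×ˢ Set.Icc p.2 q.2) =
        ENNReal.ofReal ((q.1 - p.1) * (q.2 - p.2)) := by
  have := hμ.1
  have := hμ.nullSingletonClass_fst
  have := hμ.nullSingletonClass_snd
  intro p hp q hq hx hy
  rw [measSupport_eq_support] at hp hq
  refine measure_Icc_prod_Icc_eq_ofReal_of_mem_support ?_ hp hq hx hy
  filter_upwards [h, Measure.quasiMeasurePreserving_fst.ae hμ.ae_mem_unitSquare,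
    Measure.quasiMeasurePreserving_snd.ae hμ.ae_mem_unitSquare] with pq hpq hp hq hx hy
  refine hμ.measure_Icc_prod_Icc_of_sum_minors_eq_zero hp hq hx.le hy.le rfl ?_
  rw [sum_sum_minors_fin_three]
  exact hpq hx hy _ fun _ _ => rfl
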